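/- Let G be an abelian group, X a nonempty compact Hausdorff topological space, and θ = ({X_t}_{t∈G}, {h_t}_{t∈G}) a topological partial action of G on X such that each X_t is clopen. Let α be the induced partial action of G on C(X) and R = C(X) ⋆_α G. Then R is simple (its only two-sided ideals are {0} and R) if and only if θ is topologically free and minimal. -/

import Mathlib

/-- A partial action `θ = ({X_t}, {h_t})` of a group `G` on a set `X`: subsets
`Xt t ⊆ X` and bijections `h t : Xt t⁻¹ → Xt t` (encoded as globally defined maps
whose values only matter on `Xt t⁻¹`). -/
structure SetPartialAction (G : Type*) [Group G] (X : Type*) where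
  Xt : G → Set X
  h : G → X → X
  h_mem : ∀ t, ∀ x ∈ Xt t⁻¹, h t x ∈ Xt t
  Xt_one : Xt 1 = Set.univ
  h_one : ∀ x, h 1 x = x
  h_left_inv : ∀ t, ∀ x ∈ Xt t⁻¹, h t⁻¹ (h t x) = x
  h_image : ∀ t s, h t '' (Xt t⁻¹ ∩ Xt s) = Xt t ∩ Xt (t * s)
  h_comp : ∀ t s, ∀ x ∈ Xt s⁻¹, x ∈ Xt (s⁻¹ * t⁻¹) → h t (h s x) = h (t * s) x

/-- A topological partial action of `G` on a topological space `X` in which every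
`Xt t` is clopen: the maps `h t : Xt t⁻¹ → Xt t` are homeomorphisms, i.e.
continuous on their domains (continuity of the inverse `h t⁻¹` on `Xt t` is an
instance of the same field at `t⁻¹`). -/
structure TopPartialAction (G : Type*) [Group G] (X : Type*) [TopologicalSpace X]
    extends SetPartialAction G X where
  clopen : ∀ t, IsClopen (Xt t)
  h_cont : ∀ t, ContinuousOn (h t) (Xt t⁻¹)

namespace SetPartialAction

variable {G : Type*} [Group G] {X : Type*}

/-- A subset `V ⊆ X` is `G`-invariant if `h t (V ∩ Xt t⁻¹) ⊆ V` for all `t`. -/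
def Invariant (θ : SetPartialAction G X) (V : Set X) : Prop :=
  ∀ t : G, θ.h t '' (V ∩ θ.Xt t⁻¹) ⊆ V

end SetPartialAction

namespace TopPartialAction

variable {G : Type*} [Group G] {X : Type*} [TopologicalSpace X]

/-- `θ` is minimal if `∅` and `X` are the only open `G`-invariant subsets of `X`. -/
def Minimal (θ : TopPartialAction G X) : Prop :=
  ∀ V : Set X, IsOpen V → θ.toSetPartialAction.Invariant V → V = ∅ ∨ V = Set.univ

/-- `θ` is topologically free if for every `t ≠ 1` the set
`F_t = {x ∈ Xt t⁻¹ : h t x = x}` has empty interior. -/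
def TopologicallyFree (θ : TopPartialAction G X) : Prop :=
  ∀ t : G, t ≠ 1 → interior {x ∈ θ.Xt t⁻¹ | θ.h t x = x} = ∅

/-- The ideal `D t = C(X_t) = {f ∈ C(X) : f = 0 off X_t}` of `C(X) = C(X, ℂ)`,
as an additive subgroup. -/
noncomputable def DC (θ : TopPartialAction G X) (t : G) : AddSubgroup C(X, ℂ) where
  carrier := {f : C(X, ℂ) | ∀ x ∉ θ.Xt t, f x = 0}
  zero_mem' := by intro x _; simp
  add_mem' := by intro f g hf hg x hx; simp [hf x hx, hg x hx]
  neg_mem' := by intro f hf x hx; simp [hf x hx]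

open Classical in
/-- The induced map `α t : C(X) → C(X)`, `α t f = f ∘ h t⁻¹` on `Xt t`, extended by
zero off `Xt t` (continuous since `Xt t` is clopen). -/
noncomputable def amapC (θ : TopPartialAction G X) (t : G) (f : C(X, ℂ)) : C(X, ℂ) :=
  ⟨fun x => if x ∈ θ.Xt t then f (θ.h t⁻¹ x) else 0, by
    rw [continuous_iff_continuousAt]
    intro x
    by_cases hx : x ∈ θ.Xt t
    · have hopen : IsOpen (θ.Xt t) := (θ.clopen t).isOpen
      have hc : ContinuousOn (fun y => f (θ.h t⁻¹ y)) (θ.Xt t) := by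
        apply f.continuous.comp_continuousOn
        have h1 := θ.h_cont t⁻¹
        rwa [inv_inv] at h1
      have hca := hc.continuousAt (hopen.mem_nhds hx)
      apply hca.congr
      filter_upwards [hopen.mem_nhds hx] with y hy
      simp [hy]
    · have hopen : IsOpen (θ.Xt t)ᶜ := (θ.clopen t).compl.isOpen
      have hca : ContinuousAt (fun _ : X => (0 : ℂ)) x := continuousAt_const
      apply hca.congr
      filter_upwards [hopen.mem_nhds hx] with y hy
      simp only [Set.mem_compl_iff] at hy
      simp [hy]⟩

/-- An ideal `I ⊆ C(X)` is `G`-invariant: `α t (I ∩ D t⁻¹) ⊆ I ∩ D t`. -/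
def GInvariantC (θ : TopPartialAction G X) (I : Ideal C(X, ℂ)) : Prop :=
  ∀ t : G, ∀ f ∈ I, f ∈ θ.DC t⁻¹ → θ.amapC t f ∈ I ∧ θ.amapC t f ∈ θ.DC t

/-- The underlying additive group of the partial skew group ring `C(X) ⋆_α G`. -/
abbrev SkewC (θ : TopPartialAction G X) : Type _ := Π₀ t : G, ↥(θ.DC t)

/-- The element `f δ_t` for `f ∈ D t`. -/
noncomputable def deltaC [DecidableEq G] (θ : TopPartialAction G X) (t : G)
    (f : C(X, ℂ)) (hf : f ∈ θ.DC t) : θ.SkewC :=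
  DFinsupp.single t ⟨f, hf⟩

/-- The element `f δ_0` for arbitrary `f ∈ C(X) = D 1`. -/
noncomputable def deltaC0 [DecidableEq G] (θ : TopPartialAction G X) (f : C(X, ℂ)) :
    θ.SkewC :=
  θ.deltaC 1 f (by intro x hx; rw [θ.Xt_one] at hx; exact absurd (Set.mem_univ x) hx)

end TopPartialAction

/-- The multiplication of `C(X) ⋆_α G`, *assumed* to exist, to be biadditive,
associative and to satisfy `(f δ_t)(g δ_s) = α_t(α_{t⁻¹}(f) g) δ_{ts}`. -/
structure CSkewMul {G : Type*} [Group G] [DecidableEq G] {X : Type*}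
    [TopologicalSpace X] (θ : TopPartialAction G X) where
  mul : θ.SkewC → θ.SkewC → θ.SkewC
  left_distrib : ∀ x y z, mul x (y + z) = mul x y + mul x z
  right_distrib : ∀ x y z, mul (x + y) z = mul x z + mul y z
  mul_single : ∀ (t s : G) (a : C(X, ℂ)) (ha : a ∈ θ.DC t)
      (b : C(X, ℂ)) (hb : b ∈ θ.DC s) (g : G),
    ((mul (θ.deltaC t a ha) (θ.deltaC s b hb)) g : C(X, ℂ)) =
      if g = t * s then θ.amapC t (θ.amapC t⁻¹ a * b) else 0
  assoc : ∀ x y z, mul (mul x y) z = mul x (mul y z)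

variable {G : Type*} [Group G] [DecidableEq G] {X : Type*} [TopologicalSpace X]
  {θ : TopPartialAction G X}

/-- `J` is a two-sided ideal of the partial skew group ring `C(X) ⋆_α G`. -/
def IsSkewIdealC (S : CSkewMul θ) (J : Set θ.SkewC) : Prop :=
  (0 : θ.SkewC) ∈ J ∧ (∀ x ∈ J, ∀ y ∈ J, x + y ∈ J) ∧ (∀ x ∈ J, -x ∈ J) ∧
    (∀ x ∈ J, ∀ y : θ.SkewC, S.mul x y ∈ J ∧ S.mul y x ∈ J)

/-- The center of the partial skew group ring `C(X) ⋆_α G`. -/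
def centerC (S : CSkewMul θ) : Set θ.SkewC :=
  {r | ∀ s : θ.SkewC, S.mul r s = S.mul s r}

/-!
The ring acts on functions `φ : X → ℂ` by `(aδ_t · φ)(x) = a(x) φ(h_{t⁻¹}(x))`. If `h_t` fixes an
open set pointwise and `f` is supported there, then `fδ_1` and `fδ_t` act identically, so a
faithful action, in particular that of a simple ring, forces topological freeness. An open
invariant set `V` yields the ideal of elements whose coefficients all vanish off `V`, so
simplicity also forces minimality.

Conversely, a nonzero ideal `J` contains some `q` with `q(1) ≠ 0`. Topological freeness provides an
open set `U`, inside the support of `q(1)`, which `h_{t⁻¹}` maps off itself for every `t ≠ 1` in the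
support of `q`. If `f` is a bump function on `U`, then `fδ_1 q fδ_1 = (f q(1) f)δ_1`. Hence the
ideal of those `f ∈ C(X)` with `fδ_1 ∈ J` is nonzero; it is `G`-invariant, so by minimality its
members have no common zero, and by compactness it contains `1`.
-/

section ContinuousFunctions

variable {𝕜 : Type*} [RCLike 𝕜]

theorem exists_continuousMap_eq_one_of_isOpen [CompletelyRegularSpace X] {U : Set X}
    (hU : IsOpen U) {x : X} (hx : x ∈ U) :
    ∃ f : C(X, 𝕜), f x = 1 ∧ Function.support f ⊆ U := by
  obtain ⟨g, hg, hgx, hgU⟩ := CompletelyRegularSpace.completely_regular_isOpen x U hU hx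
  refine ⟨⟨fun y ↦ ((1 - g y : ℝ) : 𝕜), by fun_prop⟩, by simp [hgx],
    Function.support_subset_iff'.mpr fun y hy ↦ ?_⟩
  simp [hgU hy]

theorem ideal_eq_bot_of_setOfIdeal_eq_empty {R : Type*} [Semiring R] [TopologicalSpace R]
    [IsTopologicalSemiring R] {I : Ideal C(X, R)} (hI : ContinuousMap.setOfIdeal I = ∅) :
    I = ⊥ := by
  rw [eq_bot_iff, ← ContinuousMap.idealOfEmpty_eq_bot]
  exact (ContinuousMap.ideal_gc X R).le_u hI.le

theorem ideal_eq_top_of_setOfIdeal_eq_univ [CompactSpace X] [T2Space X] {I : Ideal C(X, 𝕜)}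
    (hI : ContinuousMap.setOfIdeal I = Set.univ) : I = ⊤ := by
  by_contra hne
  refine I.closure_ne_top hne ?_
  rw [← ContinuousMap.idealOfSet_ofIdeal_eq_closure, hI, Ideal.eq_top_iff_one]
  exact fun x hx ↦ absurd (Set.mem_univ x) hx

end ContinuousFunctions

namespace SetPartialAction

omit [DecidableEq G]

variable {Z : Type*} (θ : SetPartialAction G Z) {t s : G} {x : Z}

theorem h_inv_mem (hx : x ∈ θ.Xt t) : θ.h t⁻¹ x ∈ θ.Xt t⁻¹ :=
  θ.h_mem t⁻¹ x (by rwa [inv_inv])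

theorem h_h_inv (hx : x ∈ θ.Xt t) : θ.h t (θ.h t⁻¹ x) = x := by
  simpa using θ.h_left_inv t⁻¹ x (by rwa [inv_inv])

theorem mem_Xt_mul (hx : x ∈ θ.Xt t) (hs : θ.h t⁻¹ x ∈ θ.Xt s) : x ∈ θ.Xt (t * s) := by
  have hmem : θ.h t (θ.h t⁻¹ x) ∈ θ.Xt t ∩ θ.Xt (t * s) :=
    θ.h_image t s ▸ Set.mem_image_of_mem _ ⟨θ.h_inv_mem hx, hs⟩
  rw [θ.h_h_inv hx] at hmem
  exact hmem.2

theorem h_inv_h_inv (hx : x ∈ θ.Xt t) (hs : θ.h t⁻¹ x ∈ θ.Xt s) :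
    θ.h s⁻¹ (θ.h t⁻¹ x) = θ.h (t * s)⁻¹ x := by
  rw [mul_inv_rev]
  exact θ.h_comp s⁻¹ t⁻¹ x (by rwa [inv_inv]) (by simpa using θ.mem_Xt_mul hx hs)

theorem fixedPoints_inv (t : G) :
    {x ∈ θ.Xt t⁻¹ | θ.h t x = x} = {x ∈ θ.Xt t | θ.h t⁻¹ x = x} := by
  ext x
  constructor
  · rintro ⟨hx, hfix⟩
    exact ⟨hfix ▸ θ.h_mem t x hx, by simpa only [hfix] using θ.h_left_inv t x hx⟩
  · rintro ⟨hx, hfix⟩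
    exact ⟨hfix ▸ θ.h_inv_mem hx, by simpa only [hfix] using θ.h_h_inv hx⟩

end SetPartialAction

namespace TopPartialAction

section Coefficients

omit [DecidableEq G]

theorem amapC_apply_of_mem {t : G} (f : C(X, ℂ)) {x : X} (hx : x ∈ θ.Xt t) :
    θ.amapC t f x = f (θ.h t⁻¹ x) :=
  if_pos hx

theorem amapC_apply_of_notMem {t : G} (f : C(X, ℂ)) {x : X} (hx : x ∉ θ.Xt t) :
    θ.amapC t f x = 0 :=
  if_neg hx

variable (θ) in
theorem amapC_mem_DC (t : G) (f : C(X, ℂ)) : θ.amapC t f ∈ θ.DC t :=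
  fun _ ↦ amapC_apply_of_notMem f

variable (θ) in
theorem mem_DC_one (f : C(X, ℂ)) : f ∈ θ.DC 1 :=
  fun x hx ↦ absurd (θ.Xt_one ▸ Set.mem_univ x) hx

theorem amapC_amapC_inv_mul_apply {t : G} {a : C(X, ℂ)} (ha : a ∈ θ.DC t) (b : C(X, ℂ)) (x : X) :
    θ.amapC t (θ.amapC t⁻¹ a * b) x = a x * b (θ.h t⁻¹ x) := by
  by_cases hx : x ∈ θ.Xt t
  · rw [amapC_apply_of_mem _ hx, ContinuousMap.mul_apply,
      amapC_apply_of_mem _ (θ.h_inv_mem hx), inv_inv, θ.h_h_inv hx]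
  · rw [amapC_apply_of_notMem _ hx, ha x hx, zero_mul]

theorem amapC_amapC_inv_mul_mem_DC {t s : G} {a b : C(X, ℂ)} (ha : a ∈ θ.DC t) (hb : b ∈ θ.DC s) :
    θ.amapC t (θ.amapC t⁻¹ a * b) ∈ θ.DC (t * s) := by
  intro x hx
  rw [amapC_amapC_inv_mul_apply ha]
  by_cases hxt : x ∈ θ.Xt t
  · rw [hb _ fun hs ↦ hx (θ.mem_Xt_mul hxt hs), mul_zero]
  · rw [ha x hxt, zero_mul]

theorem skewC_ext {r s : θ.SkewC} (h : ∀ g x, (r g : C(X, ℂ)) x = (s g : C(X, ℂ)) x) : r = s :=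
  DFinsupp.ext fun g ↦ Subtype.ext (ContinuousMap.ext (h g))

end Coefficients

theorem deltaC_apply (t : G) (a : C(X, ℂ)) (ha : a ∈ θ.DC t) (g : G) :
    (θ.deltaC t a ha g : C(X, ℂ)) = if t = g then a else 0 := by
  rw [deltaC, DFinsupp.single_apply]
  split_ifs with h
  · subst h
    rfl
  · rfl

theorem deltaC0_apply (f : C(X, ℂ)) (g : G) :
    (θ.deltaC0 f g : C(X, ℂ)) = if 1 = g then f else 0 :=
  deltaC_apply 1 f (mem_DC_one θ f) g

theorem deltaC0_zero : θ.deltaC0 0 = 0 :=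
  DFinsupp.single_zero 1

theorem deltaC0_add (f g : C(X, ℂ)) : θ.deltaC0 (f + g) = θ.deltaC0 f + θ.deltaC0 g :=
  DFinsupp.single_add (β := fun t ↦ θ.DC t) 1 ⟨f, mem_DC_one θ f⟩ ⟨g, mem_DC_one θ g⟩

@[elab_as_elim]
theorem skewC_induction {p : θ.SkewC → Prop} (r : θ.SkewC) (zero : p 0)
    (add : ∀ r s, p r → p s → p (r + s)) (deltaC : ∀ t a ha, p (θ.deltaC t a ha)) : p r := by
  induction r using DFinsupp.induction with
  | h0 => exact zero
  | ha t a r _ _ hr => exact add _ _ (deltaC t a a.2) hr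

end TopPartialAction

namespace CSkewMul

open TopPartialAction

variable (S : CSkewMul θ)

protected theorem mul_zero (r : θ.SkewC) : S.mul r 0 = 0 :=
  (AddMonoidHom.mk' (S.mul r) (S.left_distrib r)).map_zero

protected theorem zero_mul (r : θ.SkewC) : S.mul 0 r = 0 :=
  (AddMonoidHom.mk' (S.mul · r) fun s s' ↦ S.right_distrib s s' r).map_zero

theorem deltaC_mul_deltaC {t s : G} {a b : C(X, ℂ)} (ha : a ∈ θ.DC t) (hb : b ∈ θ.DC s) :
    S.mul (θ.deltaC t a ha) (θ.deltaC s b hb) =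
      θ.deltaC (t * s) (θ.amapC t (θ.amapC t⁻¹ a * b)) (amapC_amapC_inv_mul_mem_DC ha hb) := by
  refine skewC_ext fun g x ↦ ?_
  simp only [S.mul_single, deltaC_apply, eq_comm]

theorem mul_deltaC_apply (r : θ.SkewC) {s : G} {b : C(X, ℂ)} (hb : b ∈ θ.DC s) (g : G) (x : X) :
    (S.mul r (θ.deltaC s b hb) g : C(X, ℂ)) x =
      (r (g * s⁻¹) : C(X, ℂ)) x * b (θ.h (g * s⁻¹)⁻¹ x) := by
  induction r using skewC_induction with
  | zero => simp [S.zero_mul]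
  | add r r' hr hr' => simp [S.right_distrib, hr, hr', add_mul]
  | deltaC t a ha =>
    simp only [deltaC_mul_deltaC, deltaC_apply, eq_mul_inv_iff_mul_eq]
    split_ifs with h
    · rw [amapC_amapC_inv_mul_apply ha, ← h, mul_inv_cancel_right]
    · simp

theorem deltaC_mul_apply (r : θ.SkewC) {t : G} {a : C(X, ℂ)} (ha : a ∈ θ.DC t) (g : G) (x : X) :
    (S.mul (θ.deltaC t a ha) r g : C(X, ℂ)) x = a x * (r (t⁻¹ * g) : C(X, ℂ)) (θ.h t⁻¹ x) := by
  induction r using skewC_induction with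
  | zero => simp [S.mul_zero]
  | add r r' hr hr' => simp [S.left_distrib, hr, hr', mul_add]
  | deltaC s b hb =>
    simp only [deltaC_mul_deltaC, deltaC_apply, eq_inv_mul_iff_mul_eq]
    split_ifs with h
    · exact amapC_amapC_inv_mul_apply ha b x
    · simp

theorem mul_deltaC0_apply (r : θ.SkewC) (f : C(X, ℂ)) (g : G) (x : X) :
    (S.mul r (θ.deltaC0 f) g : C(X, ℂ)) x = (r g : C(X, ℂ)) x * f (θ.h g⁻¹ x) :=
  (S.mul_deltaC_apply r (mem_DC_one θ f) g x).trans (by rw [inv_one, mul_one])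

theorem deltaC0_mul_apply (f : C(X, ℂ)) (r : θ.SkewC) (g : G) (x : X) :
    (S.mul (θ.deltaC0 f) r g : C(X, ℂ)) x = f x * (r g : C(X, ℂ)) x :=
  (S.deltaC_mul_apply r (mem_DC_one θ f) g x).trans (by rw [inv_one, one_mul, θ.h_one])

theorem deltaC0_one_mul (r : θ.SkewC) : S.mul (θ.deltaC0 1) r = r :=
  skewC_ext fun g x ↦ by simp [deltaC0_mul_apply]

theorem deltaC0_mul_deltaC0 (f g : C(X, ℂ)) :
    S.mul (θ.deltaC0 f) (θ.deltaC0 g) = θ.deltaC0 (f * g) :=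
  skewC_ext fun k x ↦ by
    rw [deltaC0_mul_apply, deltaC0_apply, deltaC0_apply]
    split_ifs <;> simp

theorem deltaC_mul_deltaC0_mul_deltaC_inv (t : G) (f : C(X, ℂ)) :
    S.mul (S.mul (θ.deltaC t (θ.amapC t 1) (amapC_mem_DC θ t 1)) (θ.deltaC0 f))
      (θ.deltaC t⁻¹ (θ.amapC t⁻¹ 1) (amapC_mem_DC θ t⁻¹ 1)) = θ.deltaC0 (θ.amapC t f) := by
  refine skewC_ext fun g x ↦ ?_
  rw [S.mul_deltaC_apply, S.mul_deltaC0_apply, deltaC_apply, deltaC0_apply, inv_inv]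
  by_cases hg : g = 1
  · subst hg
    by_cases hx : x ∈ θ.Xt t
    · simp [amapC_apply_of_mem _ hx, amapC_apply_of_mem _ (θ.h_inv_mem hx)]
    · simp [amapC_apply_of_notMem _ hx]
  · simp [hg, Ne.symm hg]

/-- The ring `C(X) ⋆_α G` is simple: its only two-sided ideals are `{0}` and the whole ring. -/
def IsSimple : Prop :=
  ∀ J : Set θ.SkewC, IsSkewIdealC S J → J = {0} ∨ J = Set.univ

end CSkewMul

namespace TopPartialAction

variable (θ) in
/-- The action of `C(X) ⋆_α G` on functions `φ : X → ℂ`, in which `aδ_t` sends `φ` to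
`x ↦ a(x) φ(h_{t⁻¹}(x))`. Off `X_t` the junk value of `h_{t⁻¹}` is multiplied by `a(x) = 0`. -/
noncomputable def rep : θ.SkewC →+ Module.End ℂ (X → ℂ) :=
  DFinsupp.liftAddHom fun t ↦
    AddMonoidHom.mk' (fun a : θ.DC t ↦ LinearMap.mulLeft ℂ ⇑(a : C(X, ℂ)) ∘ₗ
      LinearMap.funLeft ℂ ℂ (θ.h t⁻¹)) fun a b ↦ by ext; simp [add_mul]

theorem rep_deltaC_apply {t : G} {a : C(X, ℂ)} (ha : a ∈ θ.DC t) (φ : X → ℂ) (x : X) :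
    θ.rep (θ.deltaC t a ha) φ x = a x * φ (θ.h t⁻¹ x) := by
  rw [rep, deltaC, DFinsupp.liftAddHom_apply_single]
  rfl

theorem rep_deltaC0_apply (f : C(X, ℂ)) (φ : X → ℂ) (x : X) :
    θ.rep (θ.deltaC0 f) φ x = f x * φ x :=
  (rep_deltaC_apply (mem_DC_one θ f) φ x).trans (by rw [inv_one, θ.h_one])

theorem rep_mul (S : CSkewMul θ) (r s : θ.SkewC) :
    θ.rep (S.mul r s) = θ.rep r * θ.rep s := by
  induction r using skewC_induction with
  | zero => simp [S.zero_mul]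
  | add r r' hr hr' => simp [S.right_distrib, hr, hr', add_mul]
  | deltaC t a ha =>
    induction s using skewC_induction with
    | zero => simp [S.mul_zero]
    | add s s' hs hs' => simp [S.left_distrib, hs, hs', mul_add]
    | deltaC s b hb =>
      refine LinearMap.ext fun φ ↦ funext fun x ↦ ?_
      rw [S.deltaC_mul_deltaC, rep_deltaC_apply, amapC_amapC_inv_mul_apply ha, Module.End.mul_apply,
        rep_deltaC_apply, rep_deltaC_apply, mul_assoc]
      by_cases hx : x ∈ θ.Xt t
      · by_cases hxs : θ.h t⁻¹ x ∈ θ.Xt s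
        · rw [θ.h_inv_h_inv hx hxs]
        · simp [hb _ hxs]
      · simp [ha x hx]

theorem isSkewIdealC_ker_rep (S : CSkewMul θ) : IsSkewIdealC S (θ.rep.ker : Set θ.SkewC) := by
  refine ⟨zero_mem _, fun _ hr _ hs ↦ add_mem hr hs, fun _ hr ↦ neg_mem hr, fun r hr s ↦ ?_⟩
  rw [SetLike.mem_coe, AddMonoidHom.mem_ker] at hr
  simp [rep_mul, hr]

theorem rep_deltaC0_eq_rep_deltaC {t : G} {f : C(X, ℂ)} (hf : f ∈ θ.DC t)
    (hfix : ∀ x, f x ≠ 0 → θ.h t⁻¹ x = x) : θ.rep (θ.deltaC0 f) = θ.rep (θ.deltaC t f hf) := by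
  refine LinearMap.ext fun φ ↦ funext fun x ↦ ?_
  rw [rep_deltaC0_apply, rep_deltaC_apply]
  by_cases hx : f x = 0
  · simp [hx]
  · rw [hfix x hx]

theorem topologicallyFree_of_injective_rep [CompletelyRegularSpace X]
    (hinj : Function.Injective θ.rep) : θ.TopologicallyFree := by
  intro t ht
  by_contra hne
  rw [θ.fixedPoints_inv] at hne
  obtain ⟨x, hx⟩ := Set.nonempty_iff_ne_empty.mpr hne
  obtain ⟨f, hfx, hf⟩ := exists_continuousMap_eq_one_of_isOpen (𝕜 := ℂ) isOpen_interior hx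
  have hfixed : ∀ y, f y ≠ 0 → y ∈ θ.Xt t ∧ θ.h t⁻¹ y = y :=
    fun y hy ↦ by simpa using interior_subset (hf hy)
  have hft : f ∈ θ.DC t := fun y hy ↦ by_contra fun h ↦ hy (hfixed y h).1
  have heq : θ.deltaC0 f = θ.deltaC t f hft :=
    hinj (rep_deltaC0_eq_rep_deltaC hft fun y hy ↦ (hfixed y hy).2)
  have hf0 : f = 0 := by
    simpa [deltaC0_apply, deltaC_apply, ht] using congrArg (fun r ↦ (r 1 : C(X, ℂ))) heq
  simp [hf0] at hfx

variable (θ) in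
/-- The elements of `C(X) ⋆_α G` all of whose coefficients vanish off `V`; an ideal when `V` is
`G`-invariant. -/
def supportedIn (V : Set X) : AddSubgroup θ.SkewC where
  carrier := {r | ∀ g, ∀ x ∉ V, (r g : C(X, ℂ)) x = 0}
  zero_mem' := by simp
  add_mem' hr hs g x hx := by simp [hr g x hx, hs g x hx]
  neg_mem' hr g x hx := by simp [hr g x hx]

theorem deltaC0_mem_supportedIn {V : Set X} {f : C(X, ℂ)} :
    θ.deltaC0 f ∈ θ.supportedIn V ↔ Function.support f ⊆ V := by
  rw [Function.support_subset_iff']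
  refine ⟨fun h x hx ↦ by simpa [deltaC0_apply] using h 1 x hx, fun h g x hx ↦ ?_⟩
  rw [deltaC0_apply]
  split_ifs
  · exact h x hx
  · rfl

theorem isSkewIdealC_supportedIn (S : CSkewMul θ) {V : Set X}
    (hV : θ.toSetPartialAction.Invariant V) :
    IsSkewIdealC S (θ.supportedIn V : Set θ.SkewC) := by
  refine ⟨zero_mem _, fun _ hr _ hs ↦ add_mem hr hs, fun _ hr ↦ neg_mem hr, fun r hr s ↦ ?_⟩
  induction s using skewC_induction with
  | zero => simp [S.mul_zero, S.zero_mul]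
  | add s s' hs hs' =>
    rw [S.left_distrib, S.right_distrib]
    exact ⟨add_mem hs.1 hs'.1, add_mem hs.2 hs'.2⟩
  | deltaC t a ha =>
    refine ⟨fun g x hx ↦ ?_, fun g x hx ↦ ?_⟩
    · rw [S.mul_deltaC_apply, hr _ x hx, zero_mul]
    · rw [S.deltaC_mul_apply]
      by_cases hxt : x ∈ θ.Xt t
      · have hxV : θ.h t⁻¹ x ∉ V := fun h ↦
          hx (hV t ⟨_, ⟨h, θ.h_inv_mem hxt⟩, θ.h_h_inv hxt⟩)
        rw [hr _ _ hxV, mul_zero]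
      · rw [ha x hxt, zero_mul]

end TopPartialAction

namespace CSkewMul.IsSimple

open TopPartialAction

variable {S : CSkewMul θ}

theorem injective_rep [Nonempty X] (hS : S.IsSimple) : Function.Injective θ.rep := by
  rw [injective_iff_map_eq_zero]
  rcases hS _ (isSkewIdealC_ker_rep S) with hker | hker
  · exact fun r hr ↦ hker.le hr
  · have hone : θ.rep (θ.deltaC0 1) = 0 := hker.ge (Set.mem_univ _)
    inhabit X
    simpa [rep_deltaC0_apply] using congrFun (LinearMap.congr_fun hone 1) default

theorem topologicallyFree [CompletelyRegularSpace X] (hS : S.IsSimple) :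
    θ.TopologicallyFree := by
  cases isEmpty_or_nonempty X
  · exact fun _ _ ↦ Set.eq_empty_of_isEmpty _
  · exact topologicallyFree_of_injective_rep hS.injective_rep

theorem minimal [CompletelyRegularSpace X] (hS : S.IsSimple) : θ.Minimal := by
  intro V hVo hV
  refine (hS _ (isSkewIdealC_supportedIn S hV)).imp (fun hJ ↦ ?_) fun hJ ↦ ?_
  · refine Set.eq_empty_of_forall_notMem fun x hx ↦ ?_
    obtain ⟨f, hfx, hf⟩ := exists_continuousMap_eq_one_of_isOpen (𝕜 := ℂ) hVo hx
    have hzero : θ.deltaC0 f = 0 := hJ.le (deltaC0_mem_supportedIn.mpr hf)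
    have hf0 : f = 0 := by
      simpa [deltaC0_apply] using congrArg (fun r ↦ (r 1 : C(X, ℂ))) hzero
    simp [hf0] at hfx
  · have hone : θ.deltaC0 1 ∈ θ.supportedIn V := hJ.ge (Set.mem_univ _)
    exact Set.eq_univ_of_forall fun x ↦ deltaC0_mem_supportedIn.mp hone one_ne_zero

end CSkewMul.IsSimple

namespace TopPartialAction

section Dynamics

omit [DecidableEq G]

theorem TopologicallyFree.exists_isOpen_forall_h_inv_notMem [T2Space X]
    (hfree : θ.TopologicallyFree) {t : G} (ht : t ≠ 1) {U : Set X} (hU : IsOpen U)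
    (hne : U.Nonempty) :
    ∃ V ⊆ U, IsOpen V ∧ V.Nonempty ∧ ∀ x ∈ V, x ∈ θ.Xt t → θ.h t⁻¹ x ∉ V := by
  obtain ⟨x, hxU, hx⟩ : ∃ x ∈ U, x ∉ {x ∈ θ.Xt t | θ.h t⁻¹ x = x} := by
    rw [← Set.not_subset, ← hU.subset_interior_iff, ← θ.fixedPoints_inv, hfree t ht,
      Set.subset_empty_iff]
    exact hne.ne_empty
  by_cases hxt : x ∈ θ.Xt t
  · obtain ⟨A, B, hA, hB, hxA, hxB, hAB⟩ := t2_separation fun h ↦ hx ⟨hxt, h.symm⟩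
    have hcont : ContinuousOn (θ.h t⁻¹) (θ.Xt t) := by simpa using θ.h_cont t⁻¹
    refine ⟨U ∩ A ∩ (θ.Xt t ∩ θ.h t⁻¹ ⁻¹' B), fun y hy ↦ hy.1.1,
      (hU.inter hA).inter (hcont.isOpen_inter_preimage (θ.clopen t).isOpen hB),
      ⟨x, ⟨hxU, hxA⟩, hxt, hxB⟩, fun y hy _ hy' ↦ ?_⟩
    exact Set.disjoint_left.mp hAB hy'.1.2 hy.2.2
  · exact ⟨U ∩ (θ.Xt t)ᶜ, Set.inter_subset_left, hU.inter (θ.clopen t).compl.isOpen,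
      ⟨x, hxU, hxt⟩, fun y hy hyt ↦ absurd hyt hy.2⟩

theorem TopologicallyFree.exists_isOpen_forall_finset_h_inv_notMem [T2Space X]
    (hfree : θ.TopologicallyFree) (T : Finset G) {U : Set X} (hU : IsOpen U) (hne : U.Nonempty) :
    ∃ V ⊆ U, IsOpen V ∧ V.Nonempty ∧
      ∀ t ∈ T, t ≠ 1 → ∀ x ∈ V, x ∈ θ.Xt t → θ.h t⁻¹ x ∉ V := by
  classical
  induction T using Finset.induction_on with
  | empty => exact ⟨U, subset_rfl, hU, hne, by simp⟩
  | insert s T _ ih =>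
    obtain ⟨V, hVU, hV, hVne, hVT⟩ := ih
    by_cases hs : s = 1
    · refine ⟨V, hVU, hV, hVne, fun t ht ht1 ↦ hVT t (Finset.mem_of_mem_insert_of_ne ht ?_) ht1⟩
      exact fun h ↦ ht1 (h.trans hs)
    obtain ⟨W, hWV, hW, hWne, hWs⟩ := hfree.exists_isOpen_forall_h_inv_notMem hs hV hVne
    refine ⟨W, hWV.trans hVU, hW, hWne, fun t ht ht1 x hx hxt hx' ↦ ?_⟩
    rcases Finset.mem_insert.mp ht with rfl | ht
    · exact hWs x hx hxt hx'
    · exact hVT t ht ht1 x (hWV hx) hxt (hWV hx')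

theorem GInvariantC.invariant_setOfIdeal {I : Ideal C(X, ℂ)} (hI : θ.GInvariantC I) :
    θ.toSetPartialAction.Invariant (ContinuousMap.setOfIdeal I) := by
  rintro t _ ⟨x, ⟨hx, hxt⟩, rfl⟩
  obtain ⟨f, hf, hfx⟩ := ContinuousMap.mem_setOfIdeal.mp hx
  let e := θ.amapC t⁻¹ 1
  have he : e * f ∈ θ.DC t⁻¹ := fun y hy ↦ by simp [e, amapC_apply_of_notMem _ hy]
  refine ContinuousMap.mem_setOfIdeal.mpr
    ⟨θ.amapC t (e * f), (hI t _ (I.mul_mem_left e hf) he).1, ?_⟩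
  rw [amapC_apply_of_mem _ (θ.h_mem t x hxt), θ.h_left_inv t x hxt]
  simpa [e, amapC_apply_of_mem _ hxt] using hfx

theorem Minimal.eq_bot_or_eq_top_of_gInvariantC [CompactSpace X] [T2Space X] (hmin : θ.Minimal)
    {I : Ideal C(X, ℂ)} (hI : θ.GInvariantC I) : I = ⊥ ∨ I = ⊤ :=
  (hmin _ (ContinuousMap.setOfIdeal_open I) hI.invariant_setOfIdeal).imp
    ideal_eq_bot_of_setOfIdeal_eq_empty ideal_eq_top_of_setOfIdeal_eq_univ

end Dynamics

end TopPartialAction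

open TopPartialAction in
theorem CSkewMul.deltaC0_mul_mul_deltaC0 (S : CSkewMul θ) {q : θ.SkewC} {U : Set X}
    {f : C(X, ℂ)} (hf : Function.support f ⊆ U)
    (hU : ∀ t, q t ≠ 0 → t ≠ 1 → ∀ x ∈ U, x ∈ θ.Xt t → θ.h t⁻¹ x ∉ U) :
    S.mul (θ.deltaC0 f) (S.mul q (θ.deltaC0 f)) = θ.deltaC0 (f * (q 1 * f)) := by
  refine skewC_ext fun t x ↦ ?_
  rw [S.deltaC0_mul_apply, S.mul_deltaC0_apply, deltaC0_apply]
  split_ifs with ht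
  · subst ht
    simp [θ.h_one]
  rw [ContinuousMap.zero_apply]
  by_contra hne
  obtain ⟨hfx, hqx, hfhx⟩ : f x ≠ 0 ∧ (q t : C(X, ℂ)) x ≠ 0 ∧ f (θ.h t⁻¹ x) ≠ 0 := by
    simpa using hne
  have hqt : q t ≠ 0 := fun h ↦ hqx (by simp [h])
  have hxt : x ∈ θ.Xt t := not_imp_comm.mp ((q t).2 x) hqx
  exact hU t hqt (Ne.symm ht) x (hf hfx) hxt (hf hfhx)

namespace IsSkewIdealC

open TopPartialAction

variable {S : CSkewMul θ} {J : Set θ.SkewC} (hJ : IsSkewIdealC S J)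

include hJ

theorem mul_mem_right {r : θ.SkewC} (hr : r ∈ J) (s : θ.SkewC) : S.mul r s ∈ J :=
  (hJ.2.2.2 r hr s).1

theorem mul_mem_left (s : θ.SkewC) {r : θ.SkewC} (hr : r ∈ J) : S.mul s r ∈ J :=
  (hJ.2.2.2 r hr s).2

theorem eq_univ_of_deltaC0_one_mem (hone : θ.deltaC0 1 ∈ J) : J = Set.univ :=
  Set.eq_univ_of_forall fun r ↦ S.deltaC0_one_mul r ▸ hJ.mul_mem_right hone r

theorem exists_coeff_one_ne_zero {r : θ.SkewC} (hr : r ∈ J) (hr0 : r ≠ 0) :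
    ∃ q ∈ J, ∃ x, (q 1 : C(X, ℂ)) x ≠ 0 := by
  obtain ⟨t, x, hx⟩ : ∃ t x, (r t : C(X, ℂ)) x ≠ 0 := by
    by_contra! h
    exact hr0 (skewC_ext h)
  have hxt : x ∈ θ.Xt t := not_imp_comm.mp ((r t).2 x) hx
  refine ⟨_, hJ.mul_mem_right hr (θ.deltaC t⁻¹ (θ.amapC t⁻¹ 1) (amapC_mem_DC θ t⁻¹ 1)), x, ?_⟩
  rw [S.mul_deltaC_apply, inv_inv, one_mul, amapC_apply_of_mem _ (θ.h_inv_mem hxt)]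
  simpa using hx

/-- The ideal of `C(X)` consisting of the functions `f` with `fδ_1 ∈ J`. -/
noncomputable def coeffIdeal : Ideal C(X, ℂ) where
  carrier := {f | θ.deltaC0 f ∈ J}
  zero_mem' := by
    change θ.deltaC0 0 ∈ J
    rw [deltaC0_zero]
    exact hJ.1
  add_mem' {f g} hf hg := by
    change θ.deltaC0 (f + g) ∈ J
    rw [deltaC0_add]
    exact hJ.2.1 _ hf _ hg
  smul_mem' f g hg := by
    change θ.deltaC0 (f * g) ∈ J
    rw [← S.deltaC0_mul_deltaC0]
    exact hJ.mul_mem_left _ hg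

theorem mem_coeffIdeal {f : C(X, ℂ)} : f ∈ hJ.coeffIdeal ↔ θ.deltaC0 f ∈ J :=
  Iff.rfl

theorem gInvariantC_coeffIdeal : θ.GInvariantC hJ.coeffIdeal := by
  intro t f hf _
  refine ⟨?_, amapC_mem_DC θ t f⟩
  rw [mem_coeffIdeal] at hf ⊢
  rw [← S.deltaC_mul_deltaC0_mul_deltaC_inv]
  exact hJ.mul_mem_right (hJ.mul_mem_left _ hf) _

theorem coeffIdeal_ne_bot [T35Space X] (hfree : θ.TopologicallyFree) (hJ0 : J ≠ {0}) :
    hJ.coeffIdeal ≠ ⊥ := by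
  classical
  obtain ⟨r, hr, hr0⟩ : ∃ r ∈ J, r ≠ 0 := by
    by_contra! h
    exact hJ0 (Set.eq_singleton_iff_unique_mem.mpr ⟨hJ.1, h⟩)
  obtain ⟨q, hq, hq1⟩ := hJ.exists_coeff_one_ne_zero hr hr0
  obtain ⟨U, hUq, hU, ⟨x, hx⟩, hUsupp⟩ :=
    hfree.exists_isOpen_forall_finset_h_inv_notMem q.support
      (isOpen_ne_fun (q 1 : C(X, ℂ)).continuous continuous_const) hq1
  obtain ⟨f, hfx, hf⟩ := exists_continuousMap_eq_one_of_isOpen (𝕜 := ℂ) hU hx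
  have hmem : f * (q 1 * f) ∈ hJ.coeffIdeal := by
    have hUcoeff := fun t ht ↦ hUsupp t (DFinsupp.mem_support_iff.mpr ht)
    rw [hJ.mem_coeffIdeal, ← S.deltaC0_mul_mul_deltaC0 hf hUcoeff]
    exact hJ.mul_mem_left _ (hJ.mul_mem_right hq _)
  intro hbot
  rw [hbot, Ideal.mem_bot] at hmem
  exact hUq hx (by simpa [hfx] using DFunLike.congr_fun hmem x)

theorem eq_zero_or_eq_univ [CompactSpace X] [T2Space X] (hfree : θ.TopologicallyFree)
    (hmin : θ.Minimal) : J = {0} ∨ J = Set.univ := by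
  refine or_iff_not_imp_left.mpr fun hJ0 ↦ hJ.eq_univ_of_deltaC0_one_mem ?_
  have htop : hJ.coeffIdeal = ⊤ :=
    (hmin.eq_bot_or_eq_top_of_gInvariantC hJ.gInvariantC_coeffIdeal).resolve_left
      (hJ.coeffIdeal_ne_bot hfree hJ0)
  exact (Ideal.eq_top_iff_one _).mp htop

end IsSkewIdealC

theorem simple_iff_topFree_and_minimal_general [CompactSpace X] [T2Space X] (S : CSkewMul θ) :
    S.IsSimple ↔ θ.TopologicallyFree ∧ θ.Minimal :=
  ⟨fun hS ↦ ⟨hS.topologicallyFree, hS.minimal⟩,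
    fun ⟨hfree, hmin⟩ _ hJ ↦ hJ.eq_zero_or_eq_univ hfree hmin⟩

theorem simple_iff_topFree_and_minimal
    {G' : Type*} [CommGroup G'] [DecidableEq G'] {Y : Type*} [TopologicalSpace Y]
    [CompactSpace Y] [T2Space Y] [Nonempty Y]
    (θ' : TopPartialAction G' Y) (S : CSkewMul θ') :
    (∀ J : Set θ'.SkewC, IsSkewIdealC S J → J = {0} ∨ J = Set.univ) ↔
      (θ'.TopologicallyFree ∧ θ'.Minimal) :=
  simple_iff_topFree_and_minimal_general S
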